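/- Let α₁,…,α_K be i.i.d. exponential random variables with mean ᾱ > 0 and let P₁ > 0, c > 0, R > 0. The outage probability p = Pr{∩_{k=1}^K log₂(1 + α_k c P₁/(α_k P₁ + 1)) < R} satisfies: if 2^R - 1 < c, then lim_{P₁→∞} -log p / log P₁ = K; if 2^R - 1 ≥ c, then p = 1 for all P₁. -/

import Mathlib

open MeasureTheory ProbabilityTheory Filter

/-!
The rate constraint `log₂ (1 + a c P / (a P + 1)) < R` on a gain `a ≥ 0` clears denominators to
`a P (c - θ) < θ` with `θ = 2 ^ R - 1`. If `c ≤ θ` it always holds. Otherwise it says that `a` lies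
below a threshold proportional to `1 / P`; since the exponential density is positive at `0`, this
has probability asymptotic to a constant over `P`, so the joint probability over `K` independent
rounds decays like `P ^ (-K)`, and its logarithm recovers the exponent `K`.
-/

section Asymptotics

lemma tendsto_neg_log_div_log_of_tendsto_rpow_mul {f : ℝ → ℝ} {b d : ℝ} (hb : b ≠ 0)
    (hf : Tendsto (fun x ↦ x ^ d * f x) atTop (nhds b)) :
    Tendsto (fun x ↦ -Real.log (f x) / Real.log x) atTop (nhds d) := by
  have hratio : Tendsto (fun x ↦ d - Real.log (x ^ d * f x) / Real.log x) atTop (nhds d) := by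
    simpa only [sub_zero] using ((hf.log hb).div_atTop Real.tendsto_log_atTop).const_sub d
  refine hratio.congr' ?_
  filter_upwards [eventually_gt_atTop 1, hf.eventually_ne hb] with x hx hne
  have hlog : Real.log x ≠ 0 := (Real.log_pos hx).ne'
  have hx0 : 0 < x := one_pos.trans hx
  rw [Real.log_mul (left_ne_zero_of_mul hne) (right_ne_zero_of_mul hne), Real.log_rpow hx0]
  field_simp
  ring

lemma tendsto_mul_one_sub_exp_neg_div (b : ℝ) :
    Tendsto (fun x ↦ x * (1 - Real.exp (-(b / x)))) atTop (nhds b) := by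
  have hslope := (hasDerivAt_neg_exp_mul_exp (r := b) (x := 0)).tendsto_slope_zero_right.comp
    tendsto_inv_atTop_nhdsGT_zero
  simpa [Function.comp_def, div_eq_mul_inv, neg_add_eq_sub] using hslope

end Asymptotics

section ExponentialLaw

lemma ae_nonneg_gammaMeasure (a r : ℝ) : ∀ᵐ x ∂gammaMeasure a r, 0 ≤ x := by
  have hneg : gammaMeasure a r (Set.Iio 0) = 0 := by
    rw [gammaMeasure, withDensity_apply _ measurableSet_Iio,
      lintegral_gammaPDF_of_nonpos le_rfl]
  simp only [ae_iff, not_le]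
  exact hneg

lemma expMeasure_real_Iio {r t : ℝ} (hr : 0 < r) (ht : 0 ≤ t) :
    (expMeasure r).real (Set.Iio t) = 1 - Real.exp (-(r * t)) := by
  have := isProbabilityMeasure_expMeasure hr
  have hatom : expMeasure r {t} = 0 :=
    withDensity_absolutelyContinuous _ _ (measure_singleton t)
  rw [measureReal_congr (Iio_ae_eq_Iic' hatom), ← cdf_eq_real, cdf_expMeasure_eq hr, if_pos ht]

end ExponentialLaw

lemma pi_setOf_forall {ι : Type*} [Fintype ι] {α : ι → Type*} [∀ i, MeasurableSpace (α i)]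
    (μ : ∀ i, Measure (α i)) [∀ i, SigmaFinite (μ i)] (q : ∀ i, α i → Prop) :
    Measure.pi μ {x | ∀ i, q i (x i)} = ∏ i, μ i {a | q i a} := by
  have hbox : {x : ∀ i, α i | ∀ i, q i (x i)} = Set.univ.pi fun i ↦ {a | q i a} := by
    ext x
    simp only [Set.mem_ofPred_eq, Set.mem_univ_pi]
  rw [hbox, Measure.pi_pi]

/-- The rate, in bits, that user 2 achieves in one round of the NOMA system when the channel gain
is `a`: the interfering signal has transmit power `P`, the useful one `c * P`, and the noise has
unit power. -/
noncomputable def nomaRate (c P a : ℝ) : ℝ :=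
  Real.logb 2 (1 + a * (c * P) / (a * P + 1))

section Outage

variable {c P R r : ℝ}

lemma nomaRate_lt_iff {a : ℝ} (hc : 0 ≤ c) (hP : 0 ≤ P) (ha : 0 ≤ a) :
    nomaRate c P a < R ↔ a * P * (c - ((2 : ℝ) ^ R - 1)) < (2 : ℝ) ^ R - 1 := by
  have hden : 0 < a * P + 1 := by positivity
  have hsinr : 0 < 1 + a * (c * P) / (a * P + 1) := by positivity
  rw [nomaRate, Real.logb_lt_iff_lt_rpow one_lt_two hsinr, ← lt_sub_iff_add_lt',
    div_lt_iff₀ hden]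
  constructor <;> intro h <;> linarith

lemma nomaRate_lt_iff_lt_div {a : ℝ} (hR : 0 ≤ R) (hcR : (2 : ℝ) ^ R - 1 < c) (hP : 0 < P)
    (ha : 0 ≤ a) :
    nomaRate c P a < R ↔ a < ((2 : ℝ) ^ R - 1) / (c - ((2 : ℝ) ^ R - 1)) / P := by
  have hθ : 0 ≤ (2 : ℝ) ^ R - 1 := sub_nonneg.2 (Real.one_le_rpow one_le_two hR)
  rw [nomaRate_lt_iff (hθ.trans hcR.le) hP.le ha, lt_div_iff₀ hP, lt_div_iff₀ (sub_pos.2 hcR)]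

lemma nomaRate_lt_of_le {a : ℝ} (hc : 0 ≤ c) (hR : 0 < R) (hcR : c ≤ (2 : ℝ) ^ R - 1)
    (hP : 0 ≤ P) (ha : 0 ≤ a) : nomaRate c P a < R := by
  have hθ : 0 < (2 : ℝ) ^ R - 1 := sub_pos.2 (Real.one_lt_rpow one_lt_two hR)
  have hgap : a * P * (c - ((2 : ℝ) ^ R - 1)) ≤ 0 :=
    mul_nonpos_of_nonneg_of_nonpos (mul_nonneg ha hP) (sub_nonpos.2 hcR)
  exact (nomaRate_lt_iff hc hP ha).2 (hgap.trans_lt hθ)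

lemma expMeasure_real_nomaRate_lt (hr : 0 < r) (hR : 0 ≤ R) (hcR : (2 : ℝ) ^ R - 1 < c)
    (hP : 0 < P) :
    (expMeasure r).real {a | nomaRate c P a < R} =
      1 - Real.exp (-(r * (((2 : ℝ) ^ R - 1) / (c - ((2 : ℝ) ^ R - 1)) / P))) := by
  have hθ : 0 ≤ (2 : ℝ) ^ R - 1 := sub_nonneg.2 (Real.one_le_rpow one_le_two hR)
  have hthreshold : 0 ≤ ((2 : ℝ) ^ R - 1) / (c - ((2 : ℝ) ^ R - 1)) / P :=
    div_nonneg (div_nonneg hθ (sub_pos.2 hcR).le) hP.le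
  rw [← expMeasure_real_Iio hr hthreshold]
  exact measureReal_congr <| (ae_nonneg_gammaMeasure 1 r).mono fun a ha ↦
    propext (nomaRate_lt_iff_lt_div hR hcR hP ha)

lemma expMeasure_real_nomaRate_lt_eq_one (hr : 0 < r) (hc : 0 ≤ c) (hR : 0 < R)
    (hcR : c ≤ (2 : ℝ) ^ R - 1) (hP : 0 ≤ P) :
    (expMeasure r).real {a | nomaRate c P a < R} = 1 := by
  have := isProbabilityMeasure_expMeasure hr
  rw [← probReal_univ (μ := expMeasure r)]
  exact measureReal_congr <| eventuallyEq_univ.2 <| (ae_nonneg_gammaMeasure 1 r).mono fun a ha ↦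
    nomaRate_lt_of_le hc hR hcR hP ha

lemma tendsto_mul_expMeasure_real_nomaRate_lt (hr : 0 < r) (hR : 0 ≤ R)
    (hcR : (2 : ℝ) ^ R - 1 < c) :
    Tendsto (fun P ↦ P * (expMeasure r).real {a | nomaRate c P a < R}) atTop
      (nhds (r * (((2 : ℝ) ^ R - 1) / (c - ((2 : ℝ) ^ R - 1))))) := by
  refine (tendsto_mul_one_sub_exp_neg_div _).congr' ?_
  filter_upwards [eventually_gt_atTop 0] with P hP
  rw [expMeasure_real_nomaRate_lt hr hR hcR hP, mul_div_assoc]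

end Outage

theorem stmt_5 (abar c R : ℝ) (K : ℕ) (habar : 0 < abar) (hc : 0 < c) (hR : 0 < R) (hK : 0 < K)
    (p : ℝ → ℝ)
    (hp : ∀ P₁ : ℝ, p P₁ = ((Measure.pi fun _ : Fin K => expMeasure (1 / abar))
      {α : Fin K → ℝ | ∀ k, Real.logb 2 (1 + α k * (c * P₁) / (α k * P₁ + 1)) < R}).toReal) :
    (((2:ℝ) ^ R - 1 < c →
        Tendsto (fun P₁ : ℝ => -Real.log (p P₁) / Real.log P₁) atTop (nhds (K : ℝ))) ∧
      (c ≤ (2:ℝ) ^ R - 1 → ∀ P₁ : ℝ, 0 < P₁ → p P₁ = 1)) := by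
  have hr : 0 < 1 / abar := one_div_pos.2 habar
  have := isProbabilityMeasure_expMeasure hr
  have hp_pow (P : ℝ) : p P = (expMeasure (1 / abar)).real {a | nomaRate c P a < R} ^ K := by
    have hpi := pi_setOf_forall (fun _ : Fin K ↦ expMeasure (1 / abar))
      fun _ a ↦ nomaRate c P a < R
    rw [Finset.prod_const, Finset.card_fin] at hpi
    rw [Measure.real, ← ENNReal.toReal_pow, ← hpi]
    exact hp P
  refine ⟨fun hcR ↦ ?_, fun hcR P hP ↦ ?_⟩
  · have hθ : 0 < (2 : ℝ) ^ R - 1 := sub_pos.2 (Real.one_lt_rpow one_lt_two hR)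
    have hlim := (tendsto_mul_expMeasure_real_nomaRate_lt hr hR.le hcR).pow K
    have hlim_pos := pow_pos (mul_pos hr (div_pos hθ (sub_pos.2 hcR))) K
    refine tendsto_neg_log_div_log_of_tendsto_rpow_mul hlim_pos.ne' ?_
    simpa only [hp_pow, Real.rpow_natCast, mul_pow] using hlim
  · rw [hp_pow, expMeasure_real_nomaRate_lt_eq_one hr hc.le hR hcR hP.le, one_pow]
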